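/- Let G = K_{m,n} be the complete bipartite graph with 2 ≤ m ≤ n, with bipartition V_1 = {v_1,...,v_m} and V_2 = {v_{m+1},...,v_{m+n}}. Then the facets of the edge cone R+A of G are exactly the m + n sets R+A ∩ {z ∈ R^{m+n} : z_i = 0} for i = 1,...,m+n. -/

import Mathlib

open Finset

/-- The edge vector `e_i + e_j` associated to an edge `{i, j}`. -/
def edgeVector {V : Type*} [DecidableEq V] (i j : V) : V → ℝ :=
  fun k => (if k = i then 1 else 0) + (if k = j then 1 else 0)

/-- The edge cone of a graph `G`: all nonnegative real linear combinations of the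
edge vectors of `G`. -/
def edgeCone {V : Type*} [Fintype V] [DecidableEq V] (G : SimpleGraph V) :
    Set (V → ℝ) :=
  { x | ∃ c : V → V → ℝ, (∀ i j, 0 ≤ c i j) ∧ (∀ i j, ¬ G.Adj i j → c i j = 0) ∧
        x = ∑ i, ∑ j, c i j • edgeVector i j }

/-- The neighbor set `N(A)`: vertices adjacent to at least one vertex of `A`. -/
def nbr {V : Type*} [Fintype V] [DecidableEq V] (G : SimpleGraph V)
    [DecidableRel G.Adj] (A : Finset V) : Finset V :=
  Finset.univ.filter fun v => ∃ a ∈ A, G.Adj v a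

/-- `A` is an independent set of vertices of `G`. -/
def IsIndep {V : Type*} (G : SimpleGraph V) (A : Finset V) : Prop :=
  ∀ a ∈ A, ∀ b ∈ A, ¬ G.Adj a b

/-- `F` is a face of the cone `Q`: `F = Q ∩ {x | ⟪x, a⟫ = 0}` for some `a` with
`Q ⊆ {x | ⟪x, a⟫ ≤ 0}`. -/
def IsFace {V : Type*} [Fintype V] (Q F : Set (V → ℝ)) : Prop :=
  ∃ a : V → ℝ, (∀ x ∈ Q, ∑ i, x i * a i ≤ 0) ∧ F = Q ∩ {x | ∑ i, x i * a i = 0}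

/-- `F` is a facet of the cone `Q`: a face whose linear span has dimension one less
than the dimension of the linear span of `Q`. -/
def IsFacet {V : Type*} [Fintype V] (Q F : Set (V → ℝ)) : Prop :=
  IsFace Q F ∧
    Module.finrank ℝ (Submodule.span ℝ F) = Module.finrank ℝ (Submodule.span ℝ Q) - 1

lemma edgeVector_symm {V : Type*} [DecidableEq V] (i j : V) :
    edgeVector i j = edgeVector j i := by
  funext k; simp only [edgeVector]; ring

lemma edgeVector_mem {V : Type*} [Fintype V] [DecidableEq V] (G : SimpleGraph V) {i j : V}
    (h : G.Adj i j) : edgeVector i j ∈ edgeCone G := by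
  refine ⟨fun a b => if a = i then (if b = j then 1 else 0) else 0, ?_, ?_, ?_⟩
  · intro a b; dsimp only; split_ifs <;> norm_num
  · intro a b hab
    dsimp only
    split_ifs with h1 h2
    · subst h1; subst h2; exact absurd h hab
    · rfl
    · rfl
  · simp [ite_smul, Finset.sum_ite_eq]

lemma edgeVector_pair {V : Type*} [Fintype V] [DecidableEq V] (a : V → ℝ) (i j : V) :
    ∑ k, edgeVector i j k * a k = a i + a j := by
  simp [edgeVector, add_mul, Finset.sum_add_distrib]

lemma cone_pair {V : Type*} [Fintype V] [DecidableEq V] (a : V → ℝ) (c : V → V → ℝ) :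
    ∑ k, (∑ i, ∑ j, c i j • edgeVector i j) k * a k = ∑ i, ∑ j, c i j * (a i + a j) := by
  simp only [Finset.sum_apply, Pi.smul_apply, smul_eq_mul, Finset.sum_mul]
  rw [Finset.sum_comm]
  refine Finset.sum_congr rfl fun i _ => ?_
  rw [Finset.sum_comm]
  refine Finset.sum_congr rfl fun j _ => ?_
  rw [← edgeVector_pair, Finset.mul_sum]
  exact Finset.sum_congr rfl fun k _ => by ring

lemma cone_nonneg {V : Type*} [Fintype V] [DecidableEq V] (G : SimpleGraph V) {x : V → ℝ}
    (hx : x ∈ edgeCone G) (v : V) : 0 ≤ x v := by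
  obtain ⟨c, hc, -, rfl⟩ := hx
  simp only [Finset.sum_apply, Pi.smul_apply, smul_eq_mul]
  refine Finset.sum_nonneg fun i _ => Finset.sum_nonneg fun j _ => mul_nonneg (hc i j) ?_
  simp only [edgeVector]
  split_ifs <;> norm_num

lemma finrank_key {V : Type*} [Fintype V] [DecidableEq V] (G : SimpleGraph V) (v v' w : V)
    (hne : v ≠ v') (h : ∀ u, G.Adj v u → G.Adj v' u) (hw : G.Adj v w) :
    Module.finrank ℝ (Submodule.span ℝ (edgeCone G)) =
      Module.finrank ℝ (Submodule.span ℝ (edgeCone G ∩ {z | z v = 0})) + 1 := by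
  set S := Submodule.span ℝ (edgeCone G ∩ {z | z v = 0}) with hS
  have hSv : ∀ x ∈ S, x v = 0 := by
    intro x hx
    have : S ≤ LinearMap.ker (LinearMap.proj (R := ℝ) (φ := fun _ : V => ℝ) v) := by
      rw [hS, Submodule.span_le]
      intro y hy
      simpa using hy.2
    simpa using this hx
  have hev : edgeVector v w v = 1 := by
    simp [edgeVector, hw.ne]
  have hne0 : edgeVector v w ≠ 0 := by
    intro h0
    rw [h0] at hev
    simp at hev
  have hS0 : ∀ i j, G.Adj i j → v ≠ i → v ≠ j → edgeVector i j ∈ S := by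
    intro i j hij h1 h2
    apply Submodule.subset_span
    refine ⟨edgeVector_mem G hij, ?_⟩
    simp [edgeVector, h1, h2]
  have hvu : ∀ u, G.Adj v u → edgeVector v u ∈ S ⊔ Submodule.span ℝ {edgeVector v w} := by
    intro u hu
    have e : edgeVector v u =
        (edgeVector v' u - edgeVector v' w) + edgeVector v w := by
      funext k
      simp only [edgeVector, Pi.add_apply, Pi.sub_apply]
      ring
    rw [e]
    exact Submodule.add_mem_sup
      (S.sub_mem (hS0 _ _ (h u hu) hne hu.ne) (hS0 _ _ (h w hw) hne hw.ne))
      (Submodule.mem_span_singleton_self _)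
  have hsup : Submodule.span ℝ (edgeCone G) = S ⊔ Submodule.span ℝ {edgeVector v w} := by
    apply le_antisymm
    · rw [Submodule.span_le]
      rintro x ⟨c, -, hc, rfl⟩
      refine Submodule.sum_mem _ fun i _ => Submodule.sum_mem _ fun j _ => ?_
      by_cases hij : G.Adj i j
      · apply Submodule.smul_mem
        by_cases h1 : v = i
        · subst h1; exact hvu j hij
        by_cases h2 : v = j
        · subst h2; rw [edgeVector_symm i v]; exact hvu i hij.symm
        exact Submodule.mem_sup_left (hS0 i j hij h1 h2)
      · rw [hc i j hij, zero_smul]; exact Submodule.zero_mem _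
    · apply sup_le
      · exact Submodule.span_mono Set.inter_subset_left
      · rw [Submodule.span_singleton_le_iff_mem]
        exact Submodule.subset_span (edgeVector_mem G hw)
  have hdis : S ⊓ Submodule.span ℝ {edgeVector v w} = ⊥ := by
    rw [eq_bot_iff]
    rintro x ⟨hx1, hx2⟩
    obtain ⟨r, rfl⟩ := Submodule.mem_span_singleton.1 hx2
    have := hSv _ hx1
    simp only [Pi.smul_apply, hev, smul_eq_mul, mul_one] at this
    simp [this]
  have := Submodule.finrank_sup_add_finrank_inf_eq S (Submodule.span ℝ {edgeVector v w})
  rw [hdis, finrank_bot, finrank_span_singleton hne0] at this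
  rw [hsup]
  simpa using this

/-- If a face contains a point with nonzero `v` coordinate, then some edge at `v` is tight. -/
lemma tight_edge {V : Type*} [Fintype V] [DecidableEq V] (G : SimpleGraph V) (a : V → ℝ)
    (ha : ∀ i j, G.Adj i j → a i + a j ≤ 0) {x : V → ℝ} (hx : x ∈ edgeCone G)
    (h0 : ∑ k, x k * a k = 0) (v : V) (hv : x v ≠ 0) :
    ∃ u, G.Adj v u ∧ a v + a u = 0 := by
  obtain ⟨c, hc, hc', rfl⟩ := hx
  rw [cone_pair] at h0
  have hle : ∀ i j, c i j * (a i + a j) ≤ 0 := by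
    intro i j
    by_cases hij : G.Adj i j
    · exact mul_nonpos_of_nonneg_of_nonpos (hc i j) (ha i j hij)
    · rw [hc' i j hij, zero_mul]
  have hz : ∀ i j, c i j * (a i + a j) = 0 := by
    intro i j
    have h1 := (Finset.sum_eq_zero_iff_of_nonpos
      (fun i _ => Finset.sum_nonpos fun j _ => hle i j)).1 h0 i (Finset.mem_univ i)
    exact (Finset.sum_eq_zero_iff_of_nonpos (fun j _ => hle i j)).1 h1 j (Finset.mem_univ j)
  simp only [Finset.sum_apply, Pi.smul_apply, smul_eq_mul] at hv
  obtain ⟨i, -, hi⟩ := Finset.exists_ne_zero_of_sum_ne_zero hv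
  obtain ⟨j, -, hj⟩ := Finset.exists_ne_zero_of_sum_ne_zero hi
  have hcij : c i j ≠ 0 := left_ne_zero_of_mul hj
  have he : edgeVector i j v ≠ 0 := right_ne_zero_of_mul hj
  have hij : G.Adj i j := by
    by_contra hn
    exact hcij (hc' i j hn)
  have ht : a i + a j = 0 := (mul_eq_zero.1 (hz i j)).resolve_left hcij
  by_cases h1 : v = i
  · subst h1; exact ⟨j, hij, ht⟩
  by_cases h2 : v = j
  · subst h2; exact ⟨i, hij.symm, by rw [add_comm]; exact ht⟩
  exact absurd (by simp [edgeVector, h1, h2]) he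

lemma finrank_bip (m n : ℕ) (hm : 2 ≤ m) (hmn : m ≤ n) (v : Fin m ⊕ Fin n) :
    Module.finrank ℝ (Submodule.span ℝ (edgeCone (completeBipartiteGraph (Fin m) (Fin n)))) =
      Module.finrank ℝ (Submodule.span ℝ
        (edgeCone (completeBipartiteGraph (Fin m) (Fin n)) ∩ {z | z v = 0})) + 1 := by
  haveI : Nontrivial (Fin m) := Fin.nontrivial_iff_two_le.2 hm
  haveI : Nontrivial (Fin n) := Fin.nontrivial_iff_two_le.2 (hm.trans hmn)
  rcases v with i | j
  · obtain ⟨i', hi'⟩ := exists_ne i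
    obtain ⟨j, -⟩ := exists_pair_ne (Fin n)
    refine finrank_key _ _ (Sum.inl i') (Sum.inr j) (by simpa using hi'.symm) ?_ (by simp)
    rintro (u | u) <;> simp
  · obtain ⟨j', hj'⟩ := exists_ne j
    obtain ⟨i, -⟩ := exists_pair_ne (Fin m)
    refine finrank_key _ _ (Sum.inr j') (Sum.inl i) (by simpa using hj'.symm) ?_ (by simp)
    rintro (u | u) <;> simp

/-- For the complete bipartite graph `K_{m,n}` with `2 ≤ m ≤ n`, the facets of the edge
cone are exactly the `m + n` sets `ℝ₊𝒜 ∩ {z | z_v = 0}` for the vertices `v`. -/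
theorem stmt19 (m n : ℕ) (hm : 2 ≤ m) (hmn : m ≤ n)
    (F : Set ((Fin m ⊕ Fin n) → ℝ)) :
    IsFacet (edgeCone (completeBipartiteGraph (Fin m) (Fin n))) F ↔
      ∃ v : Fin m ⊕ Fin n,
        F = edgeCone (completeBipartiteGraph (Fin m) (Fin n)) ∩
          {z : (Fin m ⊕ Fin n) → ℝ | z v = 0} := by
  constructor
  · rintro ⟨⟨a, ha, hF⟩, hdim⟩
    have ha' : ∀ i j, (completeBipartiteGraph (Fin m) (Fin n)).Adj i j → a i + a j ≤ 0 := by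
      intro i j hij
      rw [← edgeVector_pair]
      exact ha _ (edgeVector_mem _ hij)
    have hex : ∃ v, ∀ x ∈ F, x v = 0 := by
      by_contra! hcon
      have htight : ∀ v, ∃ u, (completeBipartiteGraph (Fin m) (Fin n)).Adj v u ∧
          a v + a u = 0 := by
        intro v
        obtain ⟨x, hx, hxv⟩ := hcon v
        rw [hF] at hx
        exact tight_edge _ a ha' hx.1 hx.2 v hxv
      have hlr : ∀ i j, a (Sum.inl i) + a (Sum.inr j) = 0 := by
        intro i j
        obtain ⟨u, hu, hu0⟩ := htight (Sum.inl i)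
        obtain ⟨w, hw, hw0⟩ := htight (Sum.inr j)
        rcases u with u | u
        · simp at hu
        rcases w with w | w
        · have h1 := ha' (Sum.inl i) (Sum.inr j) (by simp)
          have h2 := ha' (Sum.inl w) (Sum.inr u) (by simp)
          linarith
        · simp at hw
      have hall : F = edgeCone (completeBipartiteGraph (Fin m) (Fin n)) := by
        rw [hF]
        apply Set.inter_eq_left.2
        rintro x ⟨c, -, hc, rfl⟩
        simp only [Set.mem_setOf_eq]
        rw [cone_pair]
        refine Finset.sum_eq_zero fun i _ => Finset.sum_eq_zero fun j _ => ?_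
        rcases i with i | i <;> rcases j with j | j
        · rw [hc _ _ (by simp), zero_mul]
        · rw [hlr, mul_zero]
        · rw [add_comm, hlr, mul_zero]
        · rw [hc _ _ (by simp), zero_mul]
      have hk := finrank_bip m n hm hmn (Sum.inl ⟨0, by omega⟩)
      rw [hall] at hdim
      omega
    obtain ⟨v, hv⟩ := hex
    refine ⟨v, ?_⟩
    have hk := finrank_bip m n hm hmn v
    have hsub : F ⊆ edgeCone (completeBipartiteGraph (Fin m) (Fin n)) ∩ {z | z v = 0} := by
      intro x hx
      refine ⟨?_, hv x hx⟩
      rw [hF] at hx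
      exact hx.1
    have hspan := Submodule.eq_of_le_of_finrank_eq (Submodule.span_mono (R := ℝ) hsub) (by omega)
    apply Set.Subset.antisymm hsub
    intro x hx
    have hx' := Submodule.subset_span (R := ℝ) hx
    rw [← hspan] at hx'
    rw [hF]
    refine ⟨hx.1, ?_⟩
    simp only [Set.mem_setOf_eq]
    clear hx
    induction hx' using Submodule.span_induction with
    | mem y hy => rw [hF] at hy; exact hy.2
    | zero => simp
    | add y z _ _ hy hz => simp [add_mul, Finset.sum_add_distrib, hy, hz]
    | smul r y _ hy => simp [mul_assoc, ← Finset.mul_sum, hy]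
  · rintro ⟨v, rfl⟩
    refine ⟨⟨fun k => if k = v then -1 else 0, ?_, ?_⟩, ?_⟩
    · intro x hx
      have := cone_nonneg _ hx v
      simpa using this
    · simp
    · have hk := finrank_bip m n hm hmn v
      omega
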